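/- Let the setting be type A_N or type B_N and let (i_t,k_t), 1 ≤ t ≤ T, be a snake. The map P̄_{(i_t,k_t)} → M sending a non-overlapping tuple (p_1,…,p_T) to the product ∏_{t=1}^T m(p_t) is injective. -/

import Mathlib

namespace Paper

/-- The ambient setting: type `A N` (with `N ≥ 1`) or type `B N ε`
(with `N ≥ 2` and `0 < ε < 1/2`). -/
inductive Setting where
  | A (N : ℕ)
  | B (N : ℕ) (ε : ℝ)

namespace Setting

/-- The rank `N`. -/
def N : Setting → ℕ
  | A n => n
  | B n _ => n

/-- Validity of the parameters of the setting. -/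
def valid : Setting → Prop
  | A n => 1 ≤ n
  | B n ε => 2 ≤ n ∧ 0 < ε ∧ ε < 1 / 2

end Setting

/-- The numbers `r_i` : in type A all equal `1`; in type B, `r_N = 1` and `r_i = 2` for `i < N`. -/
def rr : Setting → ℕ → ℕ
  | .A _, _ => 1
  | .B n _, j => if j = n then 1 else 2

/-- The set `X` in type `A_N`. -/
def XA (n : ℕ) : Set (ℕ × ℤ) :=
  {ik | 1 ≤ ik.1 ∧ ik.1 ≤ n ∧ ((ik.1 : ℤ) - ik.2) % 2 = 1}

/-- The set `X` in type `B_N`. -/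
def XB (n : ℕ) : Set (ℕ × ℤ) :=
  {ik | (ik.1 = n ∧ ik.2 % 2 = 1) ∨ (1 ≤ ik.1 ∧ ik.1 < n ∧ ik.2 % 2 = 0)}

/-- The set `X ⊆ I × ℤ`. -/
def X : Setting → Set (ℕ × ℤ)
  | .A n => XA n
  | .B n _ => XB n

/-- The set `W = {(i,k) : (i, k - r_i) ∈ X}`. -/
def W (S : Setting) : Set (ℕ × ℤ) :=
  {ik | (ik.1, ik.2 - (rr S ik.1 : ℤ)) ∈ X S}

/-- The `r`-th point of a path (a finite list of points of the plane). -/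
def pt (p : List (ℝ × ℝ)) (r : ℕ) : ℝ × ℝ := p.getD r (0, 0)

/-- The set of paths `𝒫_{i,k}` in type `A_N`. -/
def pathsA (n : ℕ) (i : ℕ) (k : ℤ) : Set (List (ℝ × ℝ)) :=
  {p | p.length = n + 2 ∧
    (∀ r, r < n + 2 → (pt p r).1 = (r : ℝ)) ∧
    (pt p 0).2 = (i : ℝ) + (k : ℝ) ∧
    (pt p (n + 1)).2 = (n : ℝ) + 1 - (i : ℝ) + (k : ℝ) ∧
    (∀ r, r ≤ n → (pt p (r + 1)).2 - (pt p r).2 = 1 ∨ (pt p (r + 1)).2 - (pt p r).2 = -1)}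

/-- The set of paths `𝒫_{N,ℓ}` in type `B_N`. -/
def pathsBspin (n : ℕ) (ε : ℝ) (l : ℤ) : Set (List (ℝ × ℝ)) :=
  {p | p.length = n + 1 ∧
    (if l % 4 = 3 then ∀ r, r < n → (pt p r).1 = 2 * (r : ℝ)
     else ∀ r, r < n → (pt p r).1 = 4 * (n : ℝ) - 2 - 2 * (r : ℝ)) ∧
    (pt p n).1 = 2 * (n : ℝ) - 1 ∧
    (pt p 0).2 = (l : ℝ) + 2 * (n : ℝ) - 1 ∧
    (∀ r, r + 2 ≤ n → (pt p (r + 1)).2 - (pt p r).2 = 2 ∨ (pt p (r + 1)).2 - (pt p r).2 = -2) ∧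
    ((pt p n).2 - (pt p (n - 1)).2 = 1 + ε ∨ (pt p n).2 - (pt p (n - 1)).2 = -(1 + ε))}

/-- The set of paths `𝒫_{i,k}` in type `B_N`. -/
def pathsB (n : ℕ) (ε : ℝ) (i : ℕ) (k : ℤ) : Set (List (ℝ × ℝ)) :=
  if i = n then pathsBspin n ε k
  else {p | ∃ a b : List (ℝ × ℝ),
    a ∈ pathsBspin n ε (k - (2 * (n : ℤ) - 2 * (i : ℤ) - 1)) ∧
    b ∈ pathsBspin n ε (k + (2 * (n : ℤ) - 2 * (i : ℤ) - 1)) ∧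
    p = a ++ b.reverse ∧
    (pt a n).1 = (pt b n).1 ∧ 0 < (pt a n).2 - (pt b n).2}

/-- The set of paths `𝒫_{i,k}`. -/
def P : Setting → ℕ → ℤ → Set (List (ℝ × ℝ))
  | .A n => pathsA n
  | .B n ε => pathsB n ε

/-- The map `ι : X → ℤ × ℤ` of type `B_N`. -/
def iotaB (n : ℕ) (ik : ℕ × ℤ) : ℤ × ℤ :=
  if ik.1 = n then (2 * (n : ℤ) - 1, ik.2)
  else if (2 * (n : ℤ) + ik.2 - 2 * (ik.1 : ℤ)) % 4 = 2 then (2 * (ik.1 : ℤ), ik.2)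
  else (4 * (n : ℤ) - 2 - 2 * (ik.1 : ℤ), ik.2)

/-- The corners of a path: `Cp S p true` is the set `C_{p,+}` of upper corners, and
`Cp S p false` is the set `C_{p,-}` of lower corners. -/
def Cp (S : Setting) (p : List (ℝ × ℝ)) (up : Bool) : Set (ℕ × ℤ) :=
  match S with
  | .A n =>
    {jl | 1 ≤ jl.1 ∧ jl.1 ≤ n ∧
      pt p jl.1 = ((jl.1 : ℝ), (jl.2 : ℝ)) ∧
      (pt p (jl.1 - 1)).2 = (jl.2 : ℝ) + (if up then 1 else -1) ∧
      (pt p (jl.1 + 1)).2 = (jl.2 : ℝ) + (if up then 1 else -1)}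
  | .B n ε =>
    {jl | jl ∈ XB n ∧
      ((∃ r : ℕ, 1 ≤ r ∧ r + 1 < p.length ∧
          pt p r = (((iotaB n jl).1 : ℝ), ((iotaB n jl).2 : ℝ)) ∧
          (iotaB n jl).1 ≠ 0 ∧ (iotaB n jl).1 ≠ 2 * (n : ℤ) - 1 ∧
          (iotaB n jl).1 ≠ 4 * (n : ℤ) - 2 ∧
          (if up then (pt p r).2 < (pt p (r - 1)).2 ∧ (pt p r).2 < (pt p (r + 1)).2
           else (pt p (r - 1)).2 < (pt p r).2 ∧ (pt p (r + 1)).2 < (pt p r).2))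
       ∨ (jl.1 = n ∧
          (if up then (2 * (n : ℝ) - 1, (jl.2 : ℝ) - ε) ∈ p ∧ (2 * (n : ℝ) - 1, (jl.2 : ℝ) + ε) ∉ p
           else (2 * (n : ℝ) - 1, (jl.2 : ℝ) + ε) ∈ p ∧ (2 * (n : ℝ) - 1, (jl.2 : ℝ) - ε) ∉ p)))}

/-- `p'` is obtained from `p` by replacing the point `q` by the point `q'`. -/
def Replace1 (p p' : List (ℝ × ℝ)) (q q' : ℝ × ℝ) : Prop :=
  ∃ r : ℕ, r < p.length ∧ pt p r = q ∧ p'.length = p.length ∧ pt p' r = q' ∧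
    ∀ s, s < p.length → s ≠ r → pt p' s = pt p s

/-- `p'` is obtained from `p` by replacing the point `q1` by `q1'` and the point `q2` by `q2'`. -/
def Replace2 (p p' : List (ℝ × ℝ)) (q1 q1' q2 q2' : ℝ × ℝ) : Prop :=
  ∃ r s : ℕ, r < p.length ∧ s < p.length ∧ r ≠ s ∧ pt p r = q1 ∧ pt p s = q2 ∧
    p'.length = p.length ∧ pt p' r = q1' ∧ pt p' s = q2' ∧
    ∀ u, u < p.length → u ≠ r → u ≠ s → pt p' u = pt p u

/-- The path `p` can be lowered at `(j, l)`: `(j, l - r_j) ∈ C_{p,+}` and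
`(j, l + r_j) ∉ C_{p,+}`. -/
def CanLower (S : Setting) (p : List (ℝ × ℝ)) (j : ℕ) (l : ℤ) : Prop :=
  (j, l - (rr S j : ℤ)) ∈ Cp S p true ∧ (j, l + (rr S j : ℤ)) ∉ Cp S p true

/-- `p'` is the result of the lowering move at `(j,l)` applied to the path `p ∈ 𝒫_{i,k}`;
written `p' = p 𝒜_{j,l}⁻¹`. -/
def LoweredTo (S : Setting) (i : ℕ) (k : ℤ) (j : ℕ) (l : ℤ)
    (p p' : List (ℝ × ℝ)) : Prop :=
  p ∈ P S i k ∧ p' ∈ P S i k ∧ CanLower S p j l ∧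
  (match S with
   | .A _ => Replace1 p p' ((j : ℝ), (l : ℝ) - 1) ((j : ℝ), (l : ℝ) + 1)
   | .B n ε =>
     if j = n then
       Replace1 p p' (2 * (n : ℝ) - 1, (l : ℝ) - 1 - ε) (2 * (n : ℝ) - 1, (l : ℝ) + 1 + ε)
     else if j = n - 1 then
       Replace2 p p'
         (((iotaB n (j, l - 2)).1 : ℝ), (l : ℝ) - 2) (((iotaB n (j, l - 2)).1 : ℝ), (l : ℝ) + 2)
         (2 * (n : ℝ) - 1, (l : ℝ) - 1 + ε) (2 * (n : ℝ) - 1, (l : ℝ) + 1 - ε)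
     else
       Replace1 p p'
         (((iotaB n (j, l - 2)).1 : ℝ), (l : ℝ) - 2) (((iotaB n (j, l - 2)).1 : ℝ), (l : ℝ) + 2))

/-- The path `p` can be raised at `(j,l)`: it is of the form `p' 𝒜_{j,l}⁻¹`. -/
def CanRaise (S : Setting) (i : ℕ) (k : ℤ) (p : List (ℝ × ℝ)) (j : ℕ) (l : ℤ) : Prop :=
  ∃ p', LoweredTo S i k j l p' p

/-- The monomial group `ℳ`, realised as exponent functions: the free abelian group on the
symbols `Y_{i,k}`, `(i,k) ∈ X`, is identified with finitely supported functions `(ℕ × ℤ) → ℤ`,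
written additively. -/
def Y (x : ℕ × ℤ) : (ℕ × ℤ) → ℤ := fun z => if z = x then 1 else 0

noncomputable def ind (s : Prop) : ℤ := @ite ℤ s (Classical.propDecidable s) 1 0

/-- The monomial `m(p)` of a path: `∏ Y_{j,l}` over upper corners times `∏ Y_{j,l}⁻¹`
over lower corners. -/
noncomputable def mon (S : Setting) (p : List (ℝ × ℝ)) : (ℕ × ℤ) → ℤ :=
  fun x => ind (x ∈ Cp S p true) - ind (x ∈ Cp S p false)

/-- The monomials `A_{j,l}`, with the conventions `Y_{0,·} = Y_{N+1,·} = 1`. -/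
def Amon (S : Setting) (j : ℕ) (l : ℤ) : (ℕ × ℤ) → ℤ :=
  match S with
  | .A n =>
      Y (j, l + 1) + Y (j, l - 1) - (if j = 1 then 0 else Y (j - 1, l))
        - (if j = n then 0 else Y (j + 1, l))
  | .B n _ =>
      if j = n then Y (n, l + 1) + Y (n, l - 1) - Y (n - 1, l)
      else if j = n - 1 then
        Y (n - 1, l + 2) + Y (n - 1, l - 2) - (if j = 1 then 0 else Y (n - 2, l))
          - Y (n, l + 1) - Y (n, l - 1)
      else
        Y (j, l + 2) + Y (j, l - 2) - (if j = 1 then 0 else Y (j - 1, l)) - Y (j + 1, l)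

/-- A monomial is dominant iff all its exponents are nonnegative. -/
def Dominant (m : (ℕ × ℤ) → ℤ) : Prop := ∀ x, 0 ≤ m x

/-- A monomial is anti-dominant iff all its exponents are nonpositive. -/
def AntiDominant (m : (ℕ × ℤ) → ℤ) : Prop := ∀ x, m x ≤ 0

/-- `(i',k')` is in snake position with respect to `(i,k)`. -/
def SnakePos : Setting → ℕ × ℤ → ℕ × ℤ → Prop
  | .A _, ik, ik' => |(ik'.1 : ℤ) - (ik.1 : ℤ)| + 2 ≤ ik'.2 - ik.2
  | .B n _, ik, ik' =>
      if ik.1 = n ∧ ik'.1 = n then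
        2 ≤ ik'.2 - ik.2 ∧ (ik'.2 - ik.2) % 4 = 2
      else if ik.1 = n ∨ ik'.1 = n then
        2 * |(ik'.1 : ℤ) - (ik.1 : ℤ)| + 3 ≤ ik'.2 - ik.2 ∧
          (ik'.2 - ik.2) % 4 = (2 * |(ik'.1 : ℤ) - (ik.1 : ℤ)| - 1) % 4
      else
        2 * |(ik'.1 : ℤ) - (ik.1 : ℤ)| + 4 ≤ ik'.2 - ik.2 ∧
          (ik'.2 - ik.2) % 4 = (2 * |(ik'.1 : ℤ) - (ik.1 : ℤ)|) % 4

/-- A snake: a sequence of points of `X`, each in snake position w.r.t. the previous one. -/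
def IsSnake (S : Setting) {T : ℕ} (w : Fin T → ℕ × ℤ) : Prop :=
  (∀ t, w t ∈ X S) ∧
  ∀ (t : Fin T) (h : (t : ℕ) + 1 < T), SnakePos S (w t) (w ⟨(t : ℕ) + 1, h⟩)

/-- `p` is strictly above `p'`. -/
def StrictlyAbove (p p' : List (ℝ × ℝ)) : Prop :=
  ∀ a ∈ p, ∀ b ∈ p', a.1 = b.1 → a.2 < b.2

/-- A tuple of paths is non-overlapping. -/
def NonOverlapping {T : ℕ} (ps : Fin T → List (ℝ × ℝ)) : Prop :=
  ∀ s t : Fin T, s < t → StrictlyAbove (ps s) (ps t)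

/-- The set `𝒫̄` of non-overlapping tuples of paths attached to a snake. -/
def PBar (S : Setting) {T : ℕ} (w : Fin T → ℕ × ℤ) : Set (Fin T → List (ℝ × ℝ)) :=
  {ps | (∀ t, ps t ∈ P S (w t).1 (w t).2) ∧ NonOverlapping ps}

/-- The product `∏_t m(p_t)` of the monomials of a tuple of paths. -/
noncomputable def tmon (S : Setting) {T : ℕ} (ps : Fin T → List (ℝ × ℝ)) : (ℕ × ℤ) → ℤ :=
  ∑ t, mon S (ps t)

/-- Lowering move at `jl` on a tuple of paths: one component is lowered, the others
are unchanged. -/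
def TLoweredTo (S : Setting) {T : ℕ} (w : Fin T → ℕ × ℤ) (jl : ℕ × ℤ)
    (ps ps' : Fin T → List (ℝ × ℝ)) : Prop :=
  ∃ t, LoweredTo S (w t).1 (w t).2 jl.1 jl.2 (ps t) (ps' t) ∧ ∀ s, s ≠ t → ps' s = ps s

/-- Sequences of raising/lowering moves on a single path; the list records, for each move,
whether it was a lowering move (`true`) or a raising move (`false`), and its site. -/
inductive MoveSeq (S : Setting) (i : ℕ) (k : ℤ) :
    List (ℝ × ℝ) → List (ℝ × ℝ) → List (Bool × (ℕ × ℤ)) → Prop where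
  | nil (p : List (ℝ × ℝ)) : MoveSeq S i k p p []
  | lower {p q r : List (ℝ × ℝ)} {jl : ℕ × ℤ} {ms : List (Bool × (ℕ × ℤ))} :
      jl ∈ W S → LoweredTo S i k jl.1 jl.2 p q → MoveSeq S i k q r ms →
      MoveSeq S i k p r ((true, jl) :: ms)
  | raise {p q r : List (ℝ × ℝ)} {jl : ℕ × ℤ} {ms : List (Bool × (ℕ × ℤ))} :
      jl ∈ W S → LoweredTo S i k jl.1 jl.2 q p → MoveSeq S i k q r ms →
      MoveSeq S i k p r ((false, jl) :: ms)

/-- Sequences of raising/lowering moves on tuples of paths, all of whose intermediate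
tuples are non-overlapping. -/
inductive TMoveSeq (S : Setting) {T : ℕ} (w : Fin T → ℕ × ℤ) :
    (Fin T → List (ℝ × ℝ)) → (Fin T → List (ℝ × ℝ)) → List (Bool × (ℕ × ℤ)) → Prop where
  | nil (ps : Fin T → List (ℝ × ℝ)) : TMoveSeq S w ps ps []
  | lower {ps qs rs : Fin T → List (ℝ × ℝ)} {jl : ℕ × ℤ} {ms : List (Bool × (ℕ × ℤ))} :
      jl ∈ W S → TLoweredTo S w jl ps qs → NonOverlapping qs →
      TMoveSeq S w qs rs ms → TMoveSeq S w ps rs ((true, jl) :: ms)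
  | raise {ps qs rs : Fin T → List (ℝ × ℝ)} {jl : ℕ × ℤ} {ms : List (Bool × (ℕ × ℤ))} :
      jl ∈ W S → TLoweredTo S w jl qs ps → NonOverlapping qs →
      TMoveSeq S w qs rs ms → TMoveSeq S w ps rs ((false, jl) :: ms)

/-- Sequences of lowering moves on tuples of paths, all of whose intermediate tuples
are non-overlapping; the list records the sites, in order. -/
inductive TLowerSeq (S : Setting) {T : ℕ} (w : Fin T → ℕ × ℤ) :
    (Fin T → List (ℝ × ℝ)) → (Fin T → List (ℝ × ℝ)) → List (ℕ × ℤ) → Prop where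
  | nil (ps : Fin T → List (ℝ × ℝ)) : TLowerSeq S w ps ps []
  | cons {ps qs rs : Fin T → List (ℝ × ℝ)} {jl : ℕ × ℤ} {ms : List (ℕ × ℤ)} :
      jl ∈ W S → TLoweredTo S w jl ps qs → NonOverlapping qs →
      TLowerSeq S w qs rs ms → TLowerSeq S w ps rs (jl :: ms)

/-- Weak order on paths with the same x-coordinates: `p` is weakly above `p'`. -/
def WeaklyAbove (p p' : List (ℝ × ℝ)) : Prop :=
  p.length = p'.length ∧ ∀ r, r < p.length → (pt p r).2 ≤ (pt p' r).2

/-- `p` is weakly below `p'`. -/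
def WeaklyBelow (p p' : List (ℝ × ℝ)) : Prop :=
  p.length = p'.length ∧ ∀ r, r < p.length → (pt p' r).2 ≤ (pt p r).2

/-- The path `top(p, p')`. -/
def topPath (p p' : List (ℝ × ℝ)) : List (ℝ × ℝ) :=
  List.zipWith (fun a b => (a.1, min a.2 b.2)) p p'

/-- The distinguished point contained in the highest path `p⁺_{i,k}`. -/
def highPoint : Setting → ℕ → ℤ → ℝ × ℝ
  | .A _, i, k => ((i : ℝ), (k : ℝ))
  | .B n ε, i, k =>
      if i = n then (2 * (n : ℝ) - 1, (k : ℝ) - ε)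
      else (((iotaB n (i, k)).1 : ℝ), ((iotaB n (i, k)).2 : ℝ))

/-- The distinguished point contained in the lowest path `p⁻_{i,k}`. -/
def lowPoint : Setting → ℕ → ℤ → ℝ × ℝ
  | .A n, i, k => ((n : ℝ) + 1 - (i : ℝ), (k : ℝ) + (n : ℝ) + 1)
  | .B n ε, i, k =>
      if i = n then (2 * (n : ℝ) - 1, (k : ℝ) + 4 * (n : ℝ) - 2 + ε)
      else (((iotaB n (i, k + 4 * (n : ℤ) - 2)).1 : ℝ),
            ((iotaB n (i, k + 4 * (n : ℤ) - 2)).2 : ℝ))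

/-- The highest path `p⁺_{i,k}` : the path of `𝒫_{i,k}` with no lower corners. -/
noncomputable def highestPath (S : Setting) (i : ℕ) (k : ℤ) : List (ℝ × ℝ) :=
  Classical.epsilon fun p => p ∈ P S i k ∧ Cp S p false = ∅

/-- The lowest path `p⁻_{i,k}` : the path of `𝒫_{i,k}` with no upper corners. -/
noncomputable def lowestPath (S : Setting) (i : ℕ) (k : ℤ) : List (ℝ × ℝ) :=
  Classical.epsilon fun p => p ∈ P S i k ∧ Cp S p true = ∅


/-! ### Counting lemmas on integer paths -/

def dn (σ : ℤ) (z : ℕ → ℤ) (j : ℕ) (l : ℤ) : ℤ := if z j = l ∧ z (j + 1) = l - σ then 1 else 0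
def upp (σ : ℤ) (z : ℕ → ℤ) (j : ℕ) (l : ℤ) : ℤ := if z j = l ∧ z (j + 1) = l + σ then 1 else 0
def cn (z : ℕ → ℤ) (j : ℕ) (l : ℤ) : ℤ := if z j = l then 1 else 0

lemma cn_eq {σ : ℤ} (hσ : 0 < σ) {z : ℕ → ℤ} {j : ℕ}
    (h : z (j + 1) = z j + σ ∨ z (j + 1) = z j - σ) (l : ℤ) :
    cn z j l = upp σ z j l + dn σ z j l := by
  unfold cn upp dn
  split_ifs <;> omega

lemma cn_succ {σ : ℤ} (hσ : 0 < σ) {z : ℕ → ℤ} {j : ℕ}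
    (h : z (j + 1) = z j + σ ∨ z (j + 1) = z j - σ) (l : ℤ) :
    cn z (j + 1) l = upp σ z j (l - σ) + dn σ z j (l + σ) := by
  unfold cn upp dn
  split_ifs <;> omega

lemma diff_formula {C D U : ℕ → ℤ → ℤ} {σ : ℤ} {n : ℕ} (hC0 : ∀ l, C 0 l = 0)
    (h1 : ∀ j, j < n → ∀ l, C j l = U j l + D j l)
    (h2 : ∀ j, j < n → ∀ l, C (j + 1) l = U j (l - σ) + D j (l + σ))
    (h3 : ∀ j, j + 1 < n → ∀ l, D (j + 1) l = D j (l + σ)) :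
    (∀ j, j < n → ∀ l, D j l = D 0 (l + σ * j)) ∧
    (∀ j, j ≤ n → ∀ l, C j l = D 0 (l + σ * j) - D 0 (l - σ * j)) := by
  have hD : ∀ j, j < n → ∀ l, D j l = D 0 (l + σ * j) := by
    intro j
    induction j with
    | zero => intro _ l; simp
    | succ j ih =>
      intro hj l
      rw [h3 j hj, ih (by omega)]
      congr 1; push_cast; ring
  refine ⟨hD, ?_⟩
  intro j
  induction j with
  | zero => intro _ l; simp [hC0]
  | succ j ih =>
    intro hj l
    have e1 := h2 j (by omega) l
    have e2 := h1 j (by omega) (l - σ)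
    have e3 := ih (by omega) (l - σ)
    have e4 := hD j (by omega) (l - σ)
    have e5 := hD j (by omega) (l + σ)
    have a1 : l + σ * ((j + 1 : ℕ) : ℤ) = l + σ + σ * j := by push_cast; ring
    have a2 : l - σ * ((j + 1 : ℕ) : ℤ) = l - σ - σ * j := by push_cast; ring
    rw [a1, a2]
    linarith

lemma periodic_zero {f : ℤ → ℤ} {p : ℤ} (hp : 0 < p) (hper : ∀ l, f (l + p) = f l)
    (hfin : (Function.support f).Finite) : ∀ l, f l = 0 := by
  intro l
  by_contra hl
  have h : ∀ k : ℕ, f (l + k * p) = f l := by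
    intro k
    induction k with
    | zero => simp
    | succ k ih =>
      rw [← ih, ← hper (l + k * p)]
      congr 1; push_cast; ring
  have hinj : Function.Injective (fun k : ℕ => l + k * p) := by
    intro a b hab
    have : (a : ℤ) * p = b * p := by simpa using hab
    exact_mod_cast mul_right_cancel₀ hp.ne' this
  refine Set.infinite_of_injective_forall_mem hinj (fun k => ?_) hfin
  simp only [Function.mem_support]
  rw [h k]; exact hl

theorem core {ι : Type*} (s : Finset ι) (z z' : ι → ℕ → ℤ) {σ : ℤ} (hσ : 0 < σ) {n : ℕ}
    (hn : 1 ≤ n)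
    (h0 : ∀ t ∈ s, z t 0 = z' t 0)
    (hz : ∀ t ∈ s, ∀ j, j < n → z t (j + 1) = z t j + σ ∨ z t (j + 1) = z t j - σ)
    (hz' : ∀ t ∈ s, ∀ j, j < n → z' t (j + 1) = z' t j + σ ∨ z' t (j + 1) = z' t j - σ)
    (hinj : ∀ j, j < n → ∀ t ∈ s, ∀ t' ∈ s, z t j = z t' j → t = t')
    (hcor : ∀ j, j + 1 < n → ∀ l,
      ∑ t ∈ s, (dn σ (z t) j (l + σ) - dn σ (z t) (j + 1) l) =
      ∑ t ∈ s, (dn σ (z' t) j (l + σ) - dn σ (z' t) (j + 1) l))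
    (hend : (∀ t ∈ s, z t n = z' t n) ∨
      (2 ≤ n ∧ σ = 2 ∧ ∀ l, ∑ t ∈ s, (dn σ (z t) (n - 1) (l + 1) - upp σ (z t) (n - 1) (l - 1)) =
      ∑ t ∈ s, (dn σ (z' t) (n - 1) (l + 1) - upp σ (z' t) (n - 1) (l - 1)))) :
    ∀ j, j ≤ n → ∀ t ∈ s, z t j = z' t j := by
  set C : ℕ → ℤ → ℤ := fun j l => ∑ t ∈ s, cn (z t) j l - ∑ t ∈ s, cn (z' t) j l with hC
  set D : ℕ → ℤ → ℤ := fun j l => ∑ t ∈ s, dn σ (z t) j l - ∑ t ∈ s, dn σ (z' t) j l with hD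
  set U : ℕ → ℤ → ℤ := fun j l => ∑ t ∈ s, upp σ (z t) j l - ∑ t ∈ s, upp σ (z' t) j l with hU
  have hC0 : ∀ l, C 0 l = 0 := by
    intro l
    simp only [hC]
    rw [sub_eq_zero]
    refine Finset.sum_congr rfl fun t ht => ?_
    simp [cn, h0 t ht]
  have h1 : ∀ j, j < n → ∀ l, C j l = U j l + D j l := by
    intro j hj l
    simp only [hC, hD, hU]
    rw [Finset.sum_congr rfl fun t ht => cn_eq hσ (hz t ht j hj) l,
      Finset.sum_congr rfl fun t ht => cn_eq hσ (hz' t ht j hj) l,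
      Finset.sum_add_distrib, Finset.sum_add_distrib]
    ring
  have h2 : ∀ j, j < n → ∀ l, C (j + 1) l = U j (l - σ) + D j (l + σ) := by
    intro j hj l
    simp only [hC, hD, hU]
    rw [Finset.sum_congr rfl fun t ht => cn_succ hσ (hz t ht j hj) l,
      Finset.sum_congr rfl fun t ht => cn_succ hσ (hz' t ht j hj) l,
      Finset.sum_add_distrib, Finset.sum_add_distrib]
    ring
  have h3 : ∀ j, j + 1 < n → ∀ l, D (j + 1) l = D j (l + σ) := by
    intro j hj l
    have := hcor j hj l
    simp only [Finset.sum_sub_distrib] at this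
    simp only [hD]
    linarith
  obtain ⟨hDj, hCj⟩ := diff_formula hC0 h1 h2 h3
  have hfin : (Function.support (D 0)).Finite := by
    refine Set.Finite.subset ((s.image fun t => z t 0) ∪ (s.image fun t => z' t 0)).finite_toSet ?_
    intro l hl
    by_contra hcon
    apply hl
    have a1 : ∀ t ∈ s, z t 0 ≠ l := by
      intro t ht he; apply hcon; simp only [Finset.coe_union, Finset.coe_image]
      exact Or.inl ⟨t, ht, he⟩
    have a2 : ∀ t ∈ s, z' t 0 ≠ l := by
      intro t ht he; apply hcon; simp only [Finset.coe_union, Finset.coe_image]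
      exact Or.inr ⟨t, ht, he⟩
    simp only [hD]
    rw [Finset.sum_eq_zero, Finset.sum_eq_zero, sub_zero]
    · intro t ht; simp [dn, a2 t ht]
    · intro t ht; simp [dn, a1 t ht]
  have hD0 : ∀ l, D 0 l = 0 := by
    rcases hend with hend | ⟨hn2, hσ2, hend⟩
    · refine periodic_zero (p := 2 * (σ * n)) (by positivity) ?_ hfin
      intro l
      have e := hCj n le_rfl (l + σ * n)
      have e0 : C n (l + σ * n) = 0 := by
        simp only [hC]
        rw [sub_eq_zero]
        refine Finset.sum_congr rfl fun t ht => ?_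
        simp [cn, hend t ht]
      have a1 : l + σ * n + σ * n = l + 2 * (σ * n) := by ring
      have a2 : l + σ * n - σ * n = l := by ring
      rw [e0, a1, a2] at e
      linarith
    · subst hσ2
      have anti : ∀ l, D 0 (l + (4 * n - 2)) = - D 0 l := by
        intro l
        have e := hend (l + (2 * n - 1))
        simp only [Finset.sum_sub_distrib] at e
        have f1 := h1 (n - 1) (by omega) (l + (2 * n - 1) - 1)
        have f2 := hDj (n - 1) (by omega) (l + (2 * n - 1) + 1)
        have f3 := hCj (n - 1) (by omega) (l + (2 * n - 1) - 1)
        have f4 := hDj (n - 1) (by omega) (l + (2 * n - 1) - 1)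
        have e' : D (n - 1) (l + (2 * n - 1) + 1) = U (n - 1) (l + (2 * n - 1) - 1) := by
          simp only [hD, hU]; linarith
        have cst : ((n - 1 : ℕ) : ℤ) = n - 1 := by omega
        rw [cst] at f2 f3 f4
        have a1 : l + (2 * n - 1) + 1 + 2 * ((n : ℤ) - 1) = l + (4 * n - 2) := by ring
        have a2 : l + (2 * n - 1) - 1 - 2 * ((n : ℤ) - 1) = l := by ring
        rw [a1] at f2
        rw [a2] at f3
        linarith
      refine periodic_zero (p := (4 * n - 2) + (4 * n - 2)) (by omega) ?_ hfin
      intro l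
      rw [← add_assoc, anti, anti, neg_neg]
  have hDz : ∀ j, j < n → ∀ l, ∑ t ∈ s, dn σ (z t) j l = ∑ t ∈ s, dn σ (z' t) j l := by
    intro j hj l
    have := hDj j hj l
    rw [hD0] at this
    simp only [hD] at this
    linarith
  have ex : ∀ (y : ι → ℕ → ℤ) (j : ℕ) (l : ℤ), 0 < ∑ t ∈ s, dn σ (y t) j l ↔
      ∃ t ∈ s, y t j = l ∧ y t (j + 1) = l - σ := by
    intro y j l
    rw [Finset.sum_pos_iff_of_nonneg (by intro i _; unfold dn; split_ifs <;> simp)]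
    refine exists_congr fun t => and_congr_right fun _ => ?_
    unfold dn; split_ifs with h <;> simp [h]
  intro j
  induction j with
  | zero => intro _; exact h0
  | succ j ih =>
    intro hj t ht
    have ihj := ih (by omega)
    have e := ihj t ht
    have k1 : z t (j + 1) = z t j - σ → z' t (j + 1) = z' t j - σ := by
      intro h
      have := (ex z j (z t j)).2 ⟨t, ht, rfl, h⟩
      rw [hDz j hj, ex] at this
      obtain ⟨t', ht', b1, b2⟩ := this
      have : t' = t := hinj j hj t' ht' t ht (by rw [ihj t' ht', b1])
      subst this
      rw [b2, b1]
    have k2 : z' t (j + 1) = z' t j - σ → z t (j + 1) = z t j - σ := by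
      intro h
      have := (ex z' j (z' t j)).2 ⟨t, ht, rfl, h⟩
      rw [← hDz j hj, ex] at this
      obtain ⟨t', ht', b1, b2⟩ := this
      have : t' = t := hinj j hj t' ht' t ht (by rw [b1, e])
      subst this
      rw [b2, b1]
    rcases hz t ht j hj with h | h <;> rcases hz' t ht j hj with h' | h'
    · rw [h, h', e]
    · have := k2 h'; omega
    · have := k1 h; omega
    · rw [h, h', e]

/-! ### Type A -/

lemma list_ext_pt {a b : List (ℝ × ℝ)} (hl : a.length = b.length)
    (h : ∀ r, r < a.length → pt a r = pt b r) : a = b := by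
  refine List.ext_getElem hl fun r h1 h2 => ?_
  have := h r h1
  simpa [pt, List.getD_eq_getElem, h1, h2] using this

lemma pt_mem {a : List (ℝ × ℝ)} {r : ℕ} (h : r < a.length) : pt a r ∈ a := by
  simp [pt, h]

lemma exists_int_path {y : ℕ → ℝ} {σ c : ℤ} {m : ℕ} (h0 : y 0 = c)
    (h : ∀ r, r < m → y (r + 1) - y r = σ ∨ y (r + 1) - y r = -σ) :
    ∀ r, r ≤ m → y r = (⌊y r⌋ : ℤ) := by
  intro r
  induction r with
  | zero => intro _; rw [h0]; simp
  | succ r ih =>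
    intro hr
    have e := ih (by omega)
    set q := ⌊y r⌋
    rcases h r (by omega) with h | h
    · have : y (r + 1) = ((q + σ : ℤ) : ℝ) := by push_cast; linarith
      rw [this]; simp
    · have : y (r + 1) = ((q - σ : ℤ) : ℝ) := by push_cast; linarith
      rw [this]; simp

lemma decA {n i : ℕ} {k : ℤ} {p : List (ℝ × ℝ)} (hp : p ∈ pathsA n i k) :
    ∃ z : ℕ → ℤ, (∀ r, r < n + 2 → pt p r = ((r : ℝ), (z r : ℝ))) ∧ z 0 = i + k ∧
      z (n + 1) = n + 1 - i + k ∧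
      ∀ j, j < n + 1 → z (j + 1) = z j + 1 ∨ z (j + 1) = z j - 1 := by
  obtain ⟨_, h2, h3, h4, h5⟩ := hp
  have key := exists_int_path (y := fun r => (pt p r).2) (σ := 1) (c := i + k) (m := n + 1)
    (by rw [h3]; push_cast; rfl) (by
      intro r hr
      simpa using h5 r (by omega))
  refine ⟨fun r => ⌊(pt p r).2⌋, ?_, ?_, ?_, ?_⟩
  · intro r hr
    ext
    · exact h2 r hr
    · exact key r (by omega)
  · have := key 0 (by omega)
    rw [h3] at this
    simp only
    rw [h3]
    exact_mod_cast this.symm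
  · have := key (n + 1) (by omega)
    rw [h4] at this
    simp only
    rw [h4]
    exact_mod_cast this.symm
  · intro j hj
    have e1 := key j (by omega)
    have e2 := key (j + 1) (by omega)
    have := h5 j (by omega)
    rw [e1, e2] at this
    rcases this with h | h
    · left
      have : ((⌊(pt p (j + 1)).2⌋ : ℤ) : ℝ) = ((⌊(pt p j).2⌋ + 1 : ℤ) : ℝ) := by
        push_cast; linarith
      exact_mod_cast this
    · right
      have : ((⌊(pt p (j + 1)).2⌋ : ℤ) : ℝ) = ((⌊(pt p j).2⌋ - 1 : ℤ) : ℝ) := by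
        push_cast; linarith
      exact_mod_cast this

lemma monA {n : ℕ} {p : List (ℝ × ℝ)} {z : ℕ → ℤ}
    (hz : ∀ r, r < n + 2 → pt p r = ((r : ℝ), (z r : ℝ)))
    (hs : ∀ j, j < n + 1 → z (j + 1) = z j + 1 ∨ z (j + 1) = z j - 1)
    {j : ℕ} (hj : j + 1 < n + 1) (l : ℤ) :
    mon (.A n) p (j + 1, l) = dn 1 z j (l + 1) - dn 1 z (j + 1) l := by
  have hu : ((j + 1, l) ∈ Cp (.A n) p true) ↔ z (j + 1) = l ∧ z j = l + 1 ∧ z (j + 1 + 1) = l + 1 := by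
    simp only [Cp, Set.mem_ofPred_eq]
    rw [hz (j + 1) (by omega), hz (j + 1 - 1) (by omega), hz (j + 1 + 1) (by omega)]
    simp only [Prod.mk.injEq, true_and, Nat.add_sub_cancel, if_true]
    norm_cast
    constructor
    · rintro ⟨-, -, a, b, c⟩; exact ⟨a, b, c⟩
    · rintro ⟨a, b, c⟩; exact ⟨by omega, by omega, a, b, c⟩
  have hd : ((j + 1, l) ∈ Cp (.A n) p false) ↔ z (j + 1) = l ∧ z j = l - 1 ∧ z (j + 1 + 1) = l - 1 := by
    simp only [Cp, Set.mem_ofPred_eq]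
    rw [hz (j + 1) (by omega), hz (j + 1 - 1) (by omega), hz (j + 1 + 1) (by omega)]
    simp only [Prod.mk.injEq, true_and, Nat.add_sub_cancel, Bool.false_eq_true, if_false]
    have e : ((l : ℝ) + -1) = ((l - 1 : ℤ) : ℝ) := by push_cast; ring
    rw [e]
    norm_cast
    constructor
    · rintro ⟨-, -, a, b, c⟩; exact ⟨a, b, c⟩
    · rintro ⟨a, b, c⟩; exact ⟨by omega, by omega, a, b, c⟩
  have s1 := hs j (by omega)
  have s2 := hs (j + 1) (by omega)
  simp only [mon, ind, hu, hd, dn]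
  split_ifs <;> omega

theorem thmA (n : ℕ) {T : ℕ} (w : Fin T → ℕ × ℤ) :
    Set.InjOn (tmon (.A n)) (PBar (.A n) w) := by
  rintro ps ⟨hps, hno⟩ qs ⟨hqs, -⟩ heq
  choose z hz hz0 hz1 hzs using fun t => decA (hps t)
  choose y hy hy0 hy1 hys using fun t => decA (hqs t)
  have key := core Finset.univ z y (σ := 1) one_pos (n := n + 1) (by omega)
    (fun t _ => by rw [hz0, hy0]) (fun t _ => hzs t) (fun t _ => hys t)
    (by
      intro j hj
      have lt : ∀ t t', t < t' → z t j ≠ z t' j := by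
        intro t t' htt h
        have hl : j < (ps t).length := by rw [(hps t).1]; omega
        have hl' : j < (ps t').length := by rw [(hps t').1]; omega
        have := hno t t' htt _ (pt_mem hl) _ (pt_mem hl')
        rw [hz t j (by omega), hz t' j (by omega), h] at this
        simp at this
      intro t _ t' _ h
      rcases lt_trichotomy t t' with h' | h' | h'
      · exact absurd h (lt _ _ h')
      · exact h'
      · exact absurd h.symm (lt _ _ h'))
    (by
      intro j hj l
      have := congrFun heq (j + 1, l)
      simp only [tmon, Finset.sum_apply] at this
      rw [Finset.sum_congr rfl fun t _ => monA (hz t) (hzs t) hj l,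
        Finset.sum_congr rfl fun t _ => monA (hy t) (hys t) hj l] at this
      exact this)
    (Or.inl fun t _ => by rw [hz1, hy1])
  funext t
  refine list_ext_pt (by rw [(hps t).1, (hqs t).1]) fun r hr => ?_
  rw [(hps t).1] at hr
  rw [hz t r hr, hy t r hr, key r (by omega) t (Finset.mem_univ _)]

/-! ### Type B -/

/-- columns of a half path -/
noncomputable def xc (n : ℕ) (c : Bool) (r : ℕ) : ℝ :=
  if c then 2 * (r : ℝ) else 4 * (n : ℝ) - 2 - 2 * (r : ℝ)

noncomputable def endp (n : ℕ) (ε : ℝ) (z : ℕ → ℤ) : ℝ :=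
  if z n = z (n - 1) + 2 then (z (n - 1) : ℝ) + (1 + ε) else (z (n - 1) : ℝ) - (1 + ε)

noncomputable def hl (n : ℕ) (ε : ℝ) (c : Bool) (z : ℕ → ℤ) : List (ℝ × ℝ) :=
  (List.range (n + 1)).map fun r =>
    if r < n then (xc n c r, (z r : ℝ)) else (2 * (n : ℝ) - 1, endp n ε z)

lemma hl_length (n : ℕ) (ε : ℝ) (c : Bool) (z : ℕ → ℤ) : (hl n ε c z).length = n + 1 := by
  simp [hl]

lemma hl_pt {n : ℕ} {ε : ℝ} {c : Bool} {z : ℕ → ℤ} {r : ℕ} (hr : r < n) :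
    pt (hl n ε c z) r = (xc n c r, (z r : ℝ)) := by
  have h : r < (hl n ε c z).length := by rw [hl_length]; omega
  rw [pt, List.getD_eq_getElem _ _ h]
  simp [hl, hr]

lemma hl_pt_last {n : ℕ} {ε : ℝ} {c : Bool} {z : ℕ → ℤ} :
    pt (hl n ε c z) n = (2 * (n : ℝ) - 1, endp n ε z) := by
  have h : n < (hl n ε c z).length := by rw [hl_length]; omega
  rw [pt, List.getD_eq_getElem _ _ h]
  simp [hl]

lemma hl_congr {n : ℕ} {ε : ℝ} {c : Bool} {z z' : ℕ → ℤ} (h : ∀ j, j ≤ n → z j = z' j) :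
    hl n ε c z = hl n ε c z' := by
  unfold hl endp
  refine List.map_congr_left fun r hr => ?_
  rw [List.mem_range] at hr
  rw [h r (by omega), h n le_rfl, h (n - 1) (by omega)]

def Steps (n : ℕ) (z : ℕ → ℤ) : Prop :=
  ∀ j, j < n → z (j + 1) = z j + 2 ∨ z (j + 1) = z j - 2

lemma spin_half {n : ℕ} (hn : 2 ≤ n) {ε : ℝ} {l : ℤ} {a : List (ℝ × ℝ)}
    (ha : a ∈ pathsBspin n ε l) :
    ∃ z : ℕ → ℤ, a = hl n ε (decide (l % 4 = 3)) z ∧ z 0 = l + 2 * n - 1 ∧ Steps n z := by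
  obtain ⟨h1, h2, h3, h4, h5, h6⟩ := ha
  have key := exists_int_path (y := fun r => (pt a r).2) (σ := 2) (c := l + 2 * n - 1) (m := n - 1)
    (by rw [h4]; push_cast; rfl) (by
      intro r hr
      simpa using h5 r (by omega))
  set z : ℕ → ℤ := fun r => if r < n then ⌊(pt a r).2⌋ else
    if (pt a n).2 - (pt a (n - 1)).2 = 1 + ε then ⌊(pt a (n - 1)).2⌋ + 2
    else ⌊(pt a (n - 1)).2⌋ - 2 with hz
  have zlt : ∀ r, r < n → (pt a r).2 = (z r : ℝ) := by
    intro r hr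
    rw [hz]; simp only [hr, if_true]
    exact key r (by omega)
  have zn : z n = if (pt a n).2 - (pt a (n - 1)).2 = 1 + ε then z (n - 1) + 2
      else z (n - 1) - 2 := by
    simp [hz, show n - 1 < n by omega]
  refine ⟨z, ?_, ?_, ?_⟩
  · refine list_ext_pt (by rw [h1, hl_length]) fun r hr => ?_
    rw [h1] at hr
    by_cases hrn : r < n
    · rw [hl_pt hrn]
      ext
      · simp only [xc]
        by_cases hl4 : l % 4 = 3
        · simp only [hl4, if_true] at h2 ⊢
          simpa using h2 r hrn
        · simp only [hl4, if_false] at h2 ⊢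
          simpa using h2 r hrn
      · exact zlt r hrn
    · have : r = n := by omega
      subst this
      rw [hl_pt_last]
      ext
      · exact h3
      · simp only [endp]
        rw [zn]
        have e := zlt (r - 1) (by omega)
        by_cases hc : (pt a r).2 - (pt a (r - 1)).2 = 1 + ε
        · simp only [hc, if_true]; linarith
        · rw [if_neg hc, if_neg (by omega)]
          rcases h6 with h6 | h6
          · exact absurd h6 hc
          · linarith
  · have := zlt 0 (by omega)
    rw [h4] at this
    have h : ((l + 2 * n - 1 : ℤ) : ℝ) = (z 0 : ℝ) := by push_cast; exact this
    exact_mod_cast h.symm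
  · intro j hj
    by_cases hj' : j + 1 < n
    · have e1 := zlt j hj
      have e2 := zlt (j + 1) hj'
      have := h5 j (by omega)
      rw [e1, e2] at this
      rcases this with h | h
      · left
        have : (z (j + 1) : ℝ) = ((z j + 2 : ℤ) : ℝ) := by push_cast; linarith
        exact_mod_cast this
      · right
        have : (z (j + 1) : ℝ) = ((z j - 2 : ℤ) : ℝ) := by push_cast; linarith
        exact_mod_cast this
    · have : j = n - 1 := by omega
      subst this
      rw [show n - 1 + 1 = n by omega, zn]
      split_ifs <;> simp

/-- interior corner of a list at a point -/
def Qc (p : List (ℝ × ℝ)) (q : ℝ × ℝ) (up : Bool) : Prop :=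
  ∃ r : ℕ, 1 ≤ r ∧ r + 1 < p.length ∧ pt p r = q ∧
    (if up then (pt p r).2 < (pt p (r - 1)).2 ∧ (pt p r).2 < (pt p (r + 1)).2
     else (pt p (r - 1)).2 < (pt p r).2 ∧ (pt p (r + 1)).2 < (pt p r).2)

lemma pt_append_left {a b : List (ℝ × ℝ)} {r : ℕ} (h : r < a.length) :
    pt (a ++ b) r = pt a r := by
  simp [pt, List.getD_eq_getElem?_getD, List.getElem?_append_left h]

lemma pt_append_rev {a b : List (ℝ × ℝ)} {r s : ℕ} (h : r < b.length)
    (hs : s + r + 1 = a.length + b.length) :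
    pt (a ++ b.reverse) s = pt b r := by
  simp only [pt, List.getD_eq_getElem?_getD]
  rw [List.getElem?_append_right (by omega), List.getElem?_reverse (by omega)]
  congr 2
  omega

lemma Qc_append_rev {a b : List (ℝ × ℝ)} {q : ℝ × ℝ} (up : Bool)
    (ha : pt a (a.length - 1) ≠ q) (hb : pt b (b.length - 1) ≠ q) :
    Qc (a ++ b.reverse) q up ↔ Qc a q up ∨ Qc b q up := by
  constructor
  · rintro ⟨r, h1, h2, h3, h4⟩
    rw [List.length_append, List.length_reverse] at h2
    by_cases hr : r < a.length
    · left
      by_cases hr1 : r + 1 < a.length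
      · rw [pt_append_left hr] at h3 h4
        rw [pt_append_left (by omega), pt_append_left hr1] at h4
        exact ⟨r, h1, hr1, h3, h4⟩
      · exfalso
        rw [pt_append_left hr] at h3
        rw [show a.length - 1 = r by omega] at ha
        exact ha h3
    · right
      obtain ⟨s, hs⟩ : ∃ s, r + s + 1 = a.length + b.length :=
        ⟨a.length + b.length - r - 1, by omega⟩
      by_cases hs1 : s + 1 < b.length
      · rw [pt_append_rev (r := s) (by omega) hs] at h3 h4
        rw [pt_append_rev (r := s + 1) (by omega) (by omega),
          pt_append_rev (r := s - 1) (by omega) (by omega)] at h4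
        refine ⟨s, by omega, hs1, h3, ?_⟩
        cases up
        · simpa using And.intro (by simpa using h4.2) (by simpa using h4.1)
        · simpa using And.intro (by simpa using h4.2) (by simpa using h4.1)
      · exfalso
        rw [pt_append_rev (r := s) (by omega) hs] at h3
        rw [show b.length - 1 = s by omega] at hb
        exact hb h3
  · rintro (⟨r, h1, h2, h3, h4⟩ | ⟨s, h1, h2, h3, h4⟩)
    · refine ⟨r, h1, by rw [List.length_append]; omega, ?_, ?_⟩
      · rw [pt_append_left (by omega), h3]
      · rw [pt_append_left (by omega), pt_append_left (by omega), pt_append_left h2]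
        exact h4
    · obtain ⟨r, hr⟩ : ∃ r, r + s + 1 = a.length + b.length :=
        ⟨a.length + b.length - s - 1, by omega⟩
      refine ⟨r, by omega, by rw [List.length_append, List.length_reverse]; omega, ?_, ?_⟩
      · rw [pt_append_rev (r := s) (by omega) hr, h3]
      · rw [pt_append_rev (r := s) (by omega) hr,
          pt_append_rev (r := s + 1) (by omega) (by omega),
          pt_append_rev (r := s - 1) (by omega) (by omega)]
        cases up
        · simpa using And.intro (by simpa using h4.2) (by simpa using h4.1)
        · simpa using And.intro (by simpa using h4.2) (by simpa using h4.1)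

/-- congruence class attached to a side -/
def cls (n : ℕ) (c : Bool) : ℤ := if c then 2 * n + 2 else 2 * n

lemma steps_mod {n : ℕ} {z : ℕ → ℤ} {c : Bool} (hs : Steps n z) (h0 : (z 0 - cls n c) % 4 = 0) :
    ∀ j, j ≤ n → (z j - cls n c - 2 * j) % 4 = 0 := by
  intro j
  induction j with
  | zero => intro _; simpa using h0
  | succ j ih =>
    intro hj
    have := ih (by omega)
    rcases hs j (by omega) with h | h <;> rw [h] <;> push_cast <;> omega

/-- real point attached to a lattice point -/
noncomputable def iq (n : ℕ) (jl : ℕ × ℤ) : ℝ × ℝ := (((iotaB n jl).1 : ℝ), ((iotaB n jl).2 : ℝ))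

lemma xc_eq {n : ℕ} {c : Bool} {r j : ℕ} {l : ℤ} (hr : r < n) (hj : 1 ≤ j) (hjn : j < n)
    (hl : l % 2 = 0) :
    xc n c r = (iq n (j, l)).1 ↔ r = j ∧ (l - cls n c - 2 * j) % 4 = 0 := by
  have e : xc n c r = (((if c then 2 * r else 4 * n - 2 - 2 * r : ℤ)) : ℝ) := by
    unfold xc; split_ifs <;> push_cast <;> rfl
  rw [e]
  simp only [iq, iotaB, show j ≠ n by omega, if_false, cls]
  rw [Int.cast_inj]
  cases c <;> simp only [Bool.false_eq_true, if_true, if_false] <;> split_ifs <;> simp only <;> omega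

lemma hl_Qc {n : ℕ} (hn : 2 ≤ n) {ε : ℝ} (hε : 0 < ε) {c : Bool} {z : ℕ → ℤ}
    (hs : Steps n z) (h0 : (z 0 - cls n c) % 4 = 0) {j : ℕ} {l : ℤ} (hj : j + 1 < n)
    (hl2 : l % 2 = 0) (up : Bool) :
    Qc (hl n ε c z) (iq n (j + 1, l)) up ↔
      z (j + 1) = l ∧ (if up then z j = l + 2 ∧ z (j + 2) = l + 2
        else z j = l - 2 ∧ z (j + 2) = l - 2) := by
  have snd : (iq n (j + 1, l)).2 = (l : ℝ) := by
    simp only [iq, iotaB]; split_ifs <;> rfl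
  have up1 : (z (j + 1) : ℝ) < (pt (hl n ε c z) (j + 2)).2 ↔ z (j + 2) = z (j + 1) + 2 := by
    have s : z (j + 2) = z (j + 1) + 2 ∨ z (j + 2) = z (j + 1) - 2 := hs (j + 1) (by omega)
    by_cases h : j + 2 < n
    · rw [hl_pt h]; simp only; norm_cast; omega
    · have e : n = j + 2 := by omega
      subst e
      rw [hl_pt_last]; simp only [endp]
      rw [show j + 2 - 1 = j + 1 by omega]
      split_ifs with h'
      · simp only [h', iff_true]; linarith
      · simp only [h', iff_false]; linarith
  have dn1 : (pt (hl n ε c z) (j + 2)).2 < (z (j + 1) : ℝ) ↔ z (j + 2) = z (j + 1) - 2 := by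
    have s : z (j + 2) = z (j + 1) + 2 ∨ z (j + 2) = z (j + 1) - 2 := hs (j + 1) (by omega)
    by_cases h : j + 2 < n
    · rw [hl_pt h]; simp only; norm_cast; omega
    · have e : n = j + 2 := by omega
      subst e
      rw [hl_pt_last]; simp only [endp]
      rw [show j + 2 - 1 = j + 1 by omega]
      split_ifs with h'
      · simp only [h']
        constructor
        · intro; linarith
        · intro; omega
      · have : z (j + 2) = z (j + 1) - 2 := by
          rcases s with s | s
          · exact absurd s h'
          · exact s
        simp only [this, iff_true]; linarith
  have s0 := hs j (by omega)
  have main : (∃ r : ℕ, 1 ≤ r ∧ r + 1 < n + 1 ∧ pt (hl n ε c z) r = iq n (j + 1, l)) →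
      z (j + 1) = l := by
    rintro ⟨r, h1, h2, h3⟩
    rw [hl_pt (by omega)] at h3
    have a1 : xc n c r = (iq n (j + 1, l)).1 := by rw [← h3]
    have a2 : (z r : ℝ) = (iq n (j + 1, l)).2 := by rw [← h3]
    rw [xc_eq (by omega) (by omega) hj hl2] at a1
    rw [snd, a1.1] at a2
    exact_mod_cast a2
  constructor
  · rintro ⟨r, h1, h2, h3, h4⟩
    rw [hl_length] at h2
    have hzl := main ⟨r, h1, h2, h3⟩
    refine ⟨hzl, ?_⟩
    rw [hl_pt (by omega)] at h3
    have a1 : xc n c r = (iq n (j + 1, l)).1 := by rw [← h3]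
    rw [xc_eq (by omega) (by omega) hj hl2] at a1
    obtain ⟨rfl, -⟩ := a1
    rw [hl_pt (by omega), show j + 1 - 1 = j by omega, hl_pt (r := j) (by omega)] at h4
    simp only at h4
    cases up
    · simp only [Bool.false_eq_true, if_false] at h4 ⊢
      rw [show j + 1 + 1 = j + 2 by omega, dn1] at h4
      have h4' := h4.1
      norm_cast at h4'
      omega
    · simp only [if_true] at h4 ⊢
      rw [show j + 1 + 1 = j + 2 by omega, up1] at h4
      have h4' := h4.1
      norm_cast at h4'
      omega
  · rintro ⟨hzl, h4⟩
    have hm := steps_mod hs h0 (j + 1) (by omega)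
    rw [hzl] at hm
    have hx := (xc_eq (n := n) (c := c) (r := j + 1) (j := j + 1) (l := l)
      hj (by omega) hj hl2).2 ⟨rfl, hm⟩
    refine ⟨j + 1, by omega, by rw [hl_length]; omega, ?_, ?_⟩
    · rw [hl_pt hj]
      ext
      · exact hx
      · rw [snd, hzl]
    · rw [hl_pt hj, show j + 1 - 1 = j by omega, hl_pt (r := j) (by omega)]
      simp only
      rw [show j + 1 + 1 = j + 2 by omega, dn1, up1]
      cases up
      · simp only [Bool.false_eq_true, if_false] at h4 ⊢
        norm_cast
        omega
      · simp only [if_true] at h4 ⊢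
        norm_cast
        omega

lemma mem_hl {n : ℕ} {ε : ℝ} {c : Bool} {z : ℕ → ℤ} {v : ℝ} :
    (2 * (n : ℝ) - 1, v) ∈ hl n ε c z ↔ v = endp n ε z := by
  simp only [hl, List.mem_map, List.mem_range]
  constructor
  · rintro ⟨r, hr, h⟩
    by_cases hrn : r < n
    · exfalso
      simp only [hrn, if_true, Prod.mk.injEq] at h
      have h := h.1
      have e : xc n c r = (((if c then 2 * r else 4 * n - 2 - 2 * r : ℤ)) : ℝ) := by
        unfold xc; split_ifs <;> push_cast <;> rfl
      rw [e] at h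
      have e2 : 2 * (n : ℝ) - 1 = ((2 * n - 1 : ℤ) : ℝ) := by push_cast; rfl
      rw [e2] at h
      have h' : (if c then 2 * r else 4 * n - 2 - 2 * r : ℤ) = 2 * n - 1 := by exact_mod_cast h
      split_ifs at h' <;> omega
    · simp only [hrn, if_false, Prod.mk.injEq, true_and] at h
      exact h.symm
  · rintro rfl
    exact ⟨n, by omega, by simp⟩

lemma endp_lo {n : ℕ} (hn : 2 ≤ n) {ε : ℝ} (hε : 0 < ε) (hε2 : ε < 1 / 2) {z : ℕ → ℤ}
    (hs : Steps n z) (l : ℤ) :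
    (l : ℝ) - ε = endp n ε z ↔ z (n - 1) = l + 1 ∧ z (n - 1 + 1) = l + 1 - 2 := by
  have s := hs (n - 1) (by omega)
  rw [show n - 1 + 1 = n by omega] at s ⊢
  unfold endp
  split_ifs with h
  · constructor
    · intro e
      exfalso
      have a1 : (z (n - 1) : ℝ) + 1 < l := by linarith
      have a2 : (l : ℝ) < z (n - 1) + 2 := by linarith
      norm_cast at a1 a2
      omega
    · intro e; omega
  · constructor
    · intro e
      have : (z (n - 1) : ℝ) = ((l + 1 : ℤ) : ℝ) := by push_cast; linarith
      have : z (n - 1) = l + 1 := by exact_mod_cast this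
      omega
    · rintro ⟨e, -⟩
      rw [e]; push_cast; ring

lemma endp_hi {n : ℕ} (hn : 2 ≤ n) {ε : ℝ} (hε : 0 < ε) (hε2 : ε < 1 / 2) {z : ℕ → ℤ}
    (hs : Steps n z) (l : ℤ) :
    (l : ℝ) + ε = endp n ε z ↔ z (n - 1) = l - 1 ∧ z (n - 1 + 1) = l - 1 + 2 := by
  have s := hs (n - 1) (by omega)
  rw [show n - 1 + 1 = n by omega] at s ⊢
  unfold endp
  split_ifs with h
  · constructor
    · intro e
      have : (z (n - 1) : ℝ) = ((l - 1 : ℤ) : ℝ) := by push_cast; linarith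
      have : z (n - 1) = l - 1 := by exact_mod_cast this
      omega
    · rintro ⟨e, -⟩
      rw [e]; push_cast; ring
  · constructor
    · intro e
      exfalso
      have a1 : (l : ℝ) < z (n - 1) - 1 := by linarith
      have a2 : (z (n - 1) : ℝ) - 2 < l := by linarith
      norm_cast at a1 a2
      omega
    · intro e; omega

lemma iq_ne {n j : ℕ} {l : ℤ} (hj : j < n) (v : ℝ) : (2 * (n : ℝ) - 1, v) ≠ iq n (j, l) := by
  intro h
  have h1 : 2 * (n : ℝ) - 1 = (iq n (j, l)).1 := by rw [← h]
  have e2 : 2 * (n : ℝ) - 1 = ((2 * n - 1 : ℤ) : ℝ) := by push_cast; rfl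
  rw [e2] at h1
  simp only [iq] at h1
  rw [Int.cast_inj] at h1
  simp only [iotaB, show j ≠ n by omega, if_false] at h1
  split_ifs at h1 <;> simp only at h1 <;> omega

lemma Cp_int {n : ℕ} {ε : ℝ} {p : List (ℝ × ℝ)} {j : ℕ} {l : ℤ} (hj : 1 ≤ j) (hjn : j < n)
    (up : Bool) :
    (j, l) ∈ Cp (.B n ε) p up ↔ l % 2 = 0 ∧ Qc p (iq n (j, l)) up := by
  have hι : (iotaB n (j, l)).1 ≠ 0 ∧ (iotaB n (j, l)).1 ≠ 2 * (n : ℤ) - 1 ∧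
      (iotaB n (j, l)).1 ≠ 4 * (n : ℤ) - 2 := by
    simp only [iotaB, show j ≠ n by omega, if_false]
    split_ifs <;> simp only <;> omega
  simp only [Cp, Set.mem_ofPred_eq, XB, Qc, iq, show j ≠ n by omega, false_and, or_false, false_or,
    hj, hjn, true_and]
  refine and_congr_right fun _ => exists_congr fun r => ?_
  constructor
  · rintro ⟨a, b, c, -, -, -, d⟩; exact ⟨a, b, c, d⟩
  · rintro ⟨a, b, c, d⟩; exact ⟨a, b, c, hι.1, hι.2.1, hι.2.2, d⟩

lemma Cp_end {n : ℕ} {ε : ℝ} {p : List (ℝ × ℝ)} {l : ℤ} (up : Bool) :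
    (n, l) ∈ Cp (.B n ε) p up ↔ l % 2 = 1 ∧
      (if up then (2 * (n : ℝ) - 1, (l : ℝ) - ε) ∈ p ∧ (2 * (n : ℝ) - 1, (l : ℝ) + ε) ∉ p
           else (2 * (n : ℝ) - 1, (l : ℝ) + ε) ∈ p ∧ (2 * (n : ℝ) - 1, (l : ℝ) - ε) ∉ p) := by
  have hι : (iotaB n (n, l)).1 = 2 * (n : ℤ) - 1 := by simp [iotaB]
  simp [Cp, XB, hι]

lemma ind_or {A B : Prop} (h : ¬ (A ∧ B)) : ind (A ∨ B) = ind A + ind B := by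
  unfold ind
  by_cases hA : A <;> by_cases hB : B <;> simp_all

/-- contribution of a half path to the monomial -/
def hm (n : ℕ) (z : ℕ → ℤ) (j : ℕ) (l : ℤ) : ℤ :=
  if j + 1 < n then dn 2 z j (l + 2) - dn 2 z (j + 1) l
  else dn 2 z (n - 1) (l + 1) - upp 2 z (n - 1) (l - 1)

/-- The full path -/
noncomputable def fp (n : ℕ) (ε : ℝ) (c : Bool) (full : Bool) (zz : Bool → ℕ → ℤ) :
    List (ℝ × ℝ) :=
  if full then hl n ε c (zz c) ++ (hl n ε (!c) (zz (!c))).reverse else hl n ε c (zz c)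

lemma cls_ne {n : ℕ} {a b : ℤ} {c : Bool} {j : ℤ} (h1 : (a - cls n c - 2 * j) % 4 = 0)
    (h2 : (b - cls n (!c) - 2 * j) % 4 = 0) : a ≠ b := by
  unfold cls at *
  cases c <;> simp at h1 h2 <;> omega

lemma hl_mon_int {n : ℕ} {z : ℕ → ℤ} {c : Bool}
    (hs : Steps n z) (h0 : (z 0 - cls n c) % 4 = 0) {j : ℕ} (l : ℤ) (hj : j + 1 < n) :
    ind (l % 2 = 0 ∧ z (j + 1) = l ∧ z j = l + 2 ∧ z (j + 2) = l + 2) -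
      ind (l % 2 = 0 ∧ z (j + 1) = l ∧ z j = l - 2 ∧ z (j + 2) = l - 2) = hm n z j l := by
  have s1 := hs j (by omega)
  have s2 : z (j + 2) = z (j + 1) + 2 ∨ z (j + 2) = z (j + 1) - 2 := hs (j + 1) (by omega)
  have m := steps_mod hs h0 (j + 1) (by omega)
  have m2 : z (j + 1) % 2 = 0 := by
    unfold cls at m; split_ifs at m <;> omega
  unfold hm ind dn
  rw [show j + 1 + 1 = j + 2 by omega]
  simp only [hj, if_true]
  split_ifs <;> omega

lemma hl_mon_end {n : ℕ} (hn : 2 ≤ n) {z : ℕ → ℤ} {c : Bool}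
    (hs : Steps n z) (h0 : (z 0 - cls n c) % 4 = 0) {j : ℕ} (l : ℤ) (hj : j + 1 = n) :
    ind (l % 2 = 1 ∧ z (n - 1) = l + 1 ∧ z (n - 1 + 1) = l + 1 - 2) -
      ind (l % 2 = 1 ∧ z (n - 1) = l - 1 ∧ z (n - 1 + 1) = l - 1 + 2) = hm n z j l := by
  have s1 := hs (n - 1) (by omega)
  have m := steps_mod hs h0 (n - 1) (by omega)
  have m2 : z (n - 1) % 2 = 0 := by
    unfold cls at m; split_ifs at m <;> omega
  unfold hm ind dn upp
  simp only [show ¬ (j + 1 < n) by omega, if_false]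
  split_ifs <;> omega

lemma ind_congr {A B : Prop} (h : A ↔ B) : ind A = ind B := by rw [h]

lemma ind_sub {A B C : Prop} : ind (C ∧ A ∧ ¬ B) - ind (C ∧ B ∧ ¬ A) =
    ind (C ∧ A) - ind (C ∧ B) := by
  unfold ind
  by_cases hA : A <;> by_cases hB : B <;> by_cases hC : C <;> simp_all

lemma fp_mon {n : ℕ} (hn : 2 ≤ n) {ε : ℝ} (hε : 0 < ε) (hε2 : ε < 1 / 2) {c full : Bool}
    {zz : Bool → ℕ → ℤ}
    (hs : ∀ d, (full = true ∨ d = c) → Steps n (zz d))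
    (h0 : ∀ d, (full = true ∨ d = c) → (zz d 0 - cls n d) % 4 = 0) {j : ℕ} (hj : j < n) (l : ℤ) :
    mon (.B n ε) (fp n ε c full zz) (j + 1, l) =
      hm n (zz c) j l + if full then hm n (zz (!c)) j l else 0 := by
  have hsc := hs c (Or.inr rfl)
  have h0c := h0 c (Or.inr rfl)
  simp only [mon]
  by_cases hj1 : j + 1 < n
  · rw [ind_congr (Cp_int (by omega) hj1 true), ind_congr (Cp_int (by omega) hj1 false)]
    cases full
    · simp only [fp, Bool.false_eq_true, if_false, add_zero]
      rw [← hl_mon_int hsc h0c l hj1]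
      congr 1
      · exact ind_congr (and_congr_right fun hl => by simp [hl_Qc hn hε hsc h0c hj1 hl])
      · exact ind_congr (and_congr_right fun hl => by simp [hl_Qc hn hε hsc h0c hj1 hl])
    · have hsd := hs (!c) (Or.inl rfl)
      have h0d := h0 (!c) (Or.inl rfl)
      have hne := cls_ne (steps_mod hsc h0c (j + 1) (by omega))
        (steps_mod hsd h0d (j + 1) (by omega))
      have hq : ∀ up, Qc (hl n ε c (zz c) ++ (hl n ε (!c) (zz (!c))).reverse)
          (iq n (j + 1, l)) up ↔ _ := fun up => Qc_append_rev up
        (by rw [hl_length, Nat.add_sub_cancel, hl_pt_last]; exact iq_ne hj1 _)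
        (by rw [hl_length, Nat.add_sub_cancel, hl_pt_last]; exact iq_ne hj1 _)
      simp only [fp, if_true]
      simp only [hq, and_or_left]
      rw [← hl_mon_int hsc h0c l hj1, ← hl_mon_int hsd h0d l hj1]
      have e1 : ∀ up, (l % 2 = 0 ∧ Qc (hl n ε c (zz c)) (iq n (j + 1, l)) up) ↔ _ :=
        fun up => and_congr_right fun h => hl_Qc hn hε hsc h0c hj1 h up
      have e2 : ∀ up, (l % 2 = 0 ∧ Qc (hl n ε (!c) (zz (!c))) (iq n (j + 1, l)) up) ↔ _ :=
        fun up => and_congr_right fun h => hl_Qc hn hε hsd h0d hj1 h up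
      simp only [e1, e2, if_true, Bool.false_eq_true, if_false]
      rw [ind_or, ind_or]
      · ring
      · rintro ⟨⟨-, a, -⟩, ⟨-, b, -⟩⟩; exact hne (a.trans b.symm)
      · rintro ⟨⟨-, a, -⟩, ⟨-, b, -⟩⟩; exact hne (a.trans b.symm)
  · have hj2 : j + 1 = n := by omega
    rw [hj2, ind_congr (Cp_end true), ind_congr (Cp_end false)]
    simp only [if_true, Bool.false_eq_true, if_false]
    rw [ind_sub]
    cases full
    · simp only [fp, Bool.false_eq_true, if_false, add_zero, mem_hl, endp_lo hn hε hε2 hsc,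
        endp_hi hn hε hε2 hsc]
      exact hl_mon_end hn hsc h0c l hj2
    · have hsd := hs (!c) (Or.inl rfl)
      have h0d := h0 (!c) (Or.inl rfl)
      have hne := cls_ne (steps_mod hsc h0c (n - 1) (by omega))
        (steps_mod hsd h0d (n - 1) (by omega))
      simp only [fp, if_true, List.mem_append, List.mem_reverse, mem_hl, endp_lo hn hε hε2 hsc,
        endp_hi hn hε hε2 hsc, endp_lo hn hε hε2 hsd, endp_hi hn hε hε2 hsd, and_or_left]
      rw [← hl_mon_end hn hsc h0c l hj2, ← hl_mon_end hn hsd h0d l hj2]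
      rw [ind_or, ind_or]
      · ring
      · rintro ⟨⟨-, a, -⟩, ⟨-, b, -⟩⟩; exact hne (a.trans b.symm)
      · rintro ⟨⟨-, a, -⟩, ⟨-, b, -⟩⟩; exact hne (a.trans b.symm)

def isFull (n i : ℕ) : Bool := decide (i ≠ n)
def side (n i : ℕ) (k : ℤ) : Bool :=
  decide ((if i = n then k else k - (2 * (n : ℤ) - 2 * (i : ℤ) - 1)) % 4 = 3)
def start (n i : ℕ) (k : ℤ) (d : Bool) : ℤ :=
  if i = n then k + 2 * n - 1 else
    if d = side n i k then k - (2 * (n : ℤ) - 2 * (i : ℤ) - 1) + 2 * n - 1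
    else k + (2 * (n : ℤ) - 2 * (i : ℤ) - 1) + 2 * n - 1

lemma start_cls {n i : ℕ} {k : ℤ} (hx : (i, k) ∈ XB n) (d : Bool)
    (hd : isFull n i = true ∨ d = side n i k) : (start n i k d - cls n d) % 4 = 0 := by
  simp only [XB, Set.mem_ofPred_eq] at hx
  unfold start cls
  unfold isFull side at *
  by_cases hi : i = n
  · simp only [hi, if_true, ne_eq, not_true, decide_false, Bool.false_eq_true, false_or] at hd ⊢
    subst hd
    by_cases hk : k % 4 = 3 <;> simp [hk] <;> omega
  · simp only [hi, if_false]
    by_cases hk : (k - (2 * (n : ℤ) - 2 * (i : ℤ) - 1)) % 4 = 3 <;> cases d <;> simp [hk] <;> omega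

lemma decB {n : ℕ} (hn : 2 ≤ n) {ε : ℝ} {i : ℕ} {k : ℤ} (hx : (i, k) ∈ XB n)
    {p : List (ℝ × ℝ)} (hp : p ∈ pathsB n ε i k) :
    ∃ zz : Bool → ℕ → ℤ, p = fp n ε (side n i k) (isFull n i) zz ∧
      ∀ d, (isFull n i = true ∨ d = side n i k) → zz d 0 = start n i k d ∧ Steps n (zz d) := by
  unfold pathsB at hp
  by_cases hi : i = n
  · simp only [hi, if_true] at hp
    obtain ⟨z, h1, h2, h3⟩ := spin_half hn hp
    refine ⟨fun _ => z, ?_, fun d _ => ⟨?_, h3⟩⟩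
    · simp [fp, isFull, hi, side, h1]
    · simp [start, hi, h2]
  · simp only [hi, if_false, Set.mem_ofPred_eq] at hp
    obtain ⟨a, b, ha, hb, hpab, -, -⟩ := hp
    obtain ⟨z, h1, h2, h3⟩ := spin_half hn ha
    obtain ⟨z', h1', h2', h3'⟩ := spin_half hn hb
    have hside : decide ((k + (2 * (n : ℤ) - 2 * (i : ℤ) - 1)) % 4 = 3) = !(side n i k) := by
      simp only [XB, Set.mem_ofPred_eq] at hx
      simp only [side, hi, if_false]
      by_cases hk : (k - (2 * (n : ℤ) - 2 * (i : ℤ) - 1)) % 4 = 3 <;> simp [hk] <;> omega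
    have hside' : decide ((k - (2 * (n : ℤ) - 2 * (i : ℤ) - 1)) % 4 = 3) = side n i k := by
      simp [side, hi]
    rw [hside] at h1'
    rw [hside'] at h1
    refine ⟨fun d => if d = side n i k then z else z', ?_, fun d _ => ?_⟩
    · simp [fp, isFull, hi, hpab, h1, h1']
    · by_cases hd : d = side n i k
      · simp [hd, start, hi, h2, h3]
      · simp [hd, start, hi, h2', h3']

lemma fp_mem {n : ℕ} {ε : ℝ} {c full : Bool} {zz : Bool → ℕ → ℤ} {d : Bool}
    (hd : full = true ∨ d = c) {j : ℕ} (hj : j < n) :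
    (xc n d j, (zz d j : ℝ)) ∈ fp n ε c full zz := by
  have h : ∀ d, (xc n d j, (zz d j : ℝ)) ∈ hl n ε d (zz d) := by
    intro d
    rw [← hl_pt (ε := ε) hj]
    exact pt_mem (by rw [hl_length]; omega)
  cases full
  · have : d = c := by simpa using hd
    subst this
    simpa [fp] using h d
  · simp only [fp, if_true, List.mem_append, List.mem_reverse]
    by_cases hdc : d = c
    · subst hdc; exact Or.inl (h d)
    · have : d = !c := by cases d <;> cases c <;> simp_all
      subst this; exact Or.inr (h _)

lemma fp_congr {n : ℕ} {ε : ℝ} {c full : Bool} {zz yy : Bool → ℕ → ℤ}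
    (h : ∀ d, (full = true ∨ d = c) → ∀ j, j ≤ n → zz d j = yy d j) :
    fp n ε c full zz = fp n ε c full yy := by
  unfold fp
  rw [hl_congr (h c (Or.inr rfl))]
  cases full
  · rfl
  · rw [hl_congr (h (!c) (Or.inl rfl))]

theorem thmB (n : ℕ) (hn : 2 ≤ n) (ε : ℝ) (hε : 0 < ε) (hε2 : ε < 1 / 2) {T : ℕ}
    (w : Fin T → ℕ × ℤ) (hw : ∀ t, w t ∈ XB n) :
    Set.InjOn (tmon (.B n ε)) (PBar (.B n ε) w) := by
  rintro ps ⟨hps, hno⟩ qs ⟨hqs, -⟩ heq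
  choose z hz hz1 using fun t => decB hn (hw t) (hps t)
  choose y hy hy1 using fun t => decB hn (hw t) (hqs t)
  set s : Finset (Fin T × Bool) := Finset.univ.filter fun x =>
    isFull n (w x.1).1 = true ∨ x.2 = side n (w x.1).1 (w x.1).2 with hsdef
  have mems : ∀ x, x ∈ s ↔ (isFull n (w x.1).1 = true ∨ x.2 = side n (w x.1).1 (w x.1).2) := by
    intro x; simp [hsdef]
  have sums : ∀ f : Fin T × Bool → ℤ, ∑ x ∈ s, f x = ∑ t, (f (t, side n (w t).1 (w t).2) +
      if isFull n (w t).1 then f (t, !(side n (w t).1 (w t).2)) else 0) := by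
    intro f
    rw [hsdef, Finset.sum_filter, Fintype.sum_prod_type]
    refine Finset.sum_congr rfl fun t _ => ?_
    rw [Fintype.sum_bool]
    simp only
    cases side n (w t).1 (w t).2 <;> cases isFull n (w t).1 <;> simp [add_comm]
  have hzc : ∀ t d, (isFull n (w t).1 = true ∨ d = side n (w t).1 (w t).2) →
      (z t d 0 - cls n d) % 4 = 0 := by
    intro t d hd
    rw [(hz1 t d hd).1]
    exact start_cls (hw t) d hd
  have hyc : ∀ t d, (isFull n (w t).1 = true ∨ d = side n (w t).1 (w t).2) →
      (y t d 0 - cls n d) % 4 = 0 := by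
    intro t d hd
    rw [(hy1 t d hd).1]
    exact start_cls (hw t) d hd
  have hmon : ∀ j, j < n → ∀ l, ∑ x ∈ s, hm n (z x.1 x.2) j l = ∑ x ∈ s, hm n (y x.1 x.2) j l := by
    intro j hj l
    have := congrFun heq (j + 1, l)
    simp only [tmon, Finset.sum_apply] at this
    rw [sums, sums]
    have e1 : ∀ t, _ := fun t => fp_mon (ε := ε) hn hε hε2 (fun d hd => (hz1 t d hd).2) (hzc t) hj l
    have e2 : ∀ t, _ := fun t => fp_mon (ε := ε) hn hε hε2 (fun d hd => (hy1 t d hd).2) (hyc t) hj l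
    simp only [← hz] at e1
    simp only [← hy] at e2
    rw [Finset.sum_congr rfl fun t _ => e1 t, Finset.sum_congr rfl fun t _ => e2 t] at this
    exact this
  have key := core s (fun x => z x.1 x.2) (fun x => y x.1 x.2) (σ := 2) two_pos (n := n) (by omega)
    (fun x hx => by
      rw [mems] at hx
      rw [(hz1 _ _ hx).1, (hy1 _ _ hx).1])
    (fun x hx => (hz1 _ _ ((mems x).1 hx)).2) (fun x hx => (hy1 _ _ ((mems x).1 hx)).2)
    (by
      intro j hj
      have lt : ∀ t t' d, (isFull n (w t).1 = true ∨ d = side n (w t).1 (w t).2) →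
          (isFull n (w t').1 = true ∨ d = side n (w t').1 (w t').2) →
          t < t' → z t d j ≠ z t' d j := by
        intro t t' d ht ht' htt h
        have m1 := fp_mem (n := n) (ε := ε) (zz := z t) ht hj
        have m2 := fp_mem (n := n) (ε := ε) (zz := z t') ht' hj
        rw [← hz] at m1 m2
        have := hno t t' htt _ m1 _ m2 rfl
        simp only [h] at this
        exact lt_irrefl _ this
      rintro ⟨t, d⟩ hx ⟨t', d'⟩ hx' h
      rw [mems] at hx hx'
      simp only at hx hx' h
      have hdd : d = d' := by
        by_contra hne
        have : d' = !d := by cases d <;> cases d' <;> simp_all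
        subst this
        exact cls_ne (steps_mod (hz1 t d hx).2 (hzc t d hx) j hj.le)
          (steps_mod (hz1 t' _ hx').2 (hzc t' _ hx') j hj.le) h
      subst hdd
      rcases lt_trichotomy t t' with h' | h' | h'
      · exact absurd h (lt _ _ _ hx hx' h')
      · rw [h']
      · exact absurd h.symm (lt _ _ _ hx' hx h'))
    (by
      intro j hj l
      have := hmon j (by omega) l
      simpa only [hm, hj, if_true] using this)
    (Or.inr ⟨hn, rfl, by
      intro l
      have := hmon (n - 1) (by omega) l
      simpa only [hm, show ¬ (n - 1 + 1 < n) by omega, if_false] using this⟩)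
  funext t
  rw [hz t, hy t]
  exact fp_congr fun d hd j hj => key j hj (t, d) ((mems _).2 hd)

/-- the map `𝒫̄ → ℳ`, `(p_1,…,p_T) ↦ ∏_t m(p_t)`, is injective. -/
theorem stmt11 (S : Setting) (hS : S.valid) {T : ℕ} (hT : 1 ≤ T)
    (w : Fin T → ℕ × ℤ) (hw : IsSnake S w) :
    Set.InjOn (tmon S) (PBar S w) := by
  cases S with
  | A n => exact thmA n w
  | B n ε => exact thmB n hS.1 ε hS.2.1 hS.2.2 w hw.1

end Paper
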